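/- Let n ≥ 1, let f : ℝⁿ → ℂ be a Schwartz function, and fix an index k with 1 ≤ k ≤ n. Then (∫_{ℝⁿ} |x_k|² |f(x)|² dx)^{1/2} · (∫_{ℝⁿ} |∂_{x_k} f(x)|² dx)^{1/2} ≥ (1/2) ∫_{ℝⁿ} |f(x)|² dx. That is, ‖x_k f‖_{L²} · ‖∂_{x_k} f‖_{L²} ≥ (1/2) ‖f‖_{L²}², where x_k f denotes the function x ↦ x_k · f(x) and ∂_{x_k} f denotes the k-th partial derivative of f. -/

import Mathlib

open MeasureTheory

/-!
For a real multiplier `ψ` of temperate growth, the commutator of multiplication by `ψ` with `∂_v`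
is multiplication by `-∂_v ψ`. Since `∂_v` is skew-adjoint on Schwartz functions, pairing the
commutator with `f` gives `∫ ∂_v ψ ‖f‖² = -2 ∫ ⟪ψ f, ∂_v f⟫`, and the Cauchy–Schwarz inequality in
`L²` bounds the right-hand side. The coordinate `ψ x = x k` has `∂_v ψ = 1` along the `k`-th basis
vector.
-/

open scoped SchwartzMap LineDeriv

theorem norm_integral_inner_le_sqrt_mul_sqrt {α 𝕜 F : Type*} [RCLike 𝕜] [NormedAddCommGroup F]
    [InnerProductSpace 𝕜 F] {m : MeasurableSpace α} {μ : Measure α} {f g : α → F}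
    (hf : MemLp f 2 μ) (hg : MemLp g 2 μ) :
    ‖∫ x, inner 𝕜 (f x) (g x) ∂μ‖ ≤ √(∫ x, ‖f x‖ ^ 2 ∂μ) * √(∫ x, ‖g x‖ ^ 2 ∂μ) := by
  have holder : ∫ x, ‖f x‖ * ‖g x‖ ∂μ ≤ √(∫ x, ‖f x‖ ^ 2 ∂μ) * √(∫ x, ‖g x‖ ^ 2 ∂μ) := by
    simpa only [Real.rpow_two, ← Real.sqrt_eq_rpow] using
      integral_mul_norm_le_Lp_mul_Lq Real.HolderConjugate.two_two
        (by simpa using hf) (by simpa using hg)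
  calc ‖∫ x, inner 𝕜 (f x) (g x) ∂μ‖
      ≤ ∫ x, ‖f x‖ * ‖g x‖ ∂μ :=
        norm_integral_le_of_norm_le (hf.norm.integrable_mul hg.norm)
          (.of_forall fun x ↦ norm_inner_le_norm (f x) (g x))
    _ ≤ √(∫ x, ‖f x‖ ^ 2 ∂μ) * √(∫ x, ‖g x‖ ^ 2 ∂μ) := holder

theorem lineDerivOp_smulLeftCLM_apply {𝕜 E F : Type*} [NontriviallyNormedField 𝕜]
    [NormedAlgebra ℝ 𝕜] [NormedAddCommGroup E] [NormedSpace ℝ E] [NormedAddCommGroup F]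
    [NormedSpace ℝ F] [NormedSpace 𝕜 F] [IsScalarTower ℝ 𝕜 F] {ψ : E → 𝕜}
    (hψ : ψ.HasTemperateGrowth) (f : 𝓢(E, F)) (v x : E) :
    ∂_{v} (SchwartzMap.smulLeftCLM F ψ f) x = fderiv ℝ ψ x v • f x + ψ x • ∂_{v} f x := by
  have hψx : DifferentiableAt ℝ ψ x := hψ.1.differentiable (by simp) x
  simp only [SchwartzMap.lineDerivOp_apply_eq_fderiv, SchwartzMap.smulLeftCLM_apply hψ]
  rw [fderiv_fun_smul hψx f.differentiableAt]
  simp [add_comm]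

section Uncertainty

variable {E F : Type*} [NormedAddCommGroup E] [NormedSpace ℝ E] [FiniteDimensional ℝ E]
  [MeasurableSpace E] [BorelSpace E] [NormedAddCommGroup F] [InnerProductSpace ℝ F]
  (μ : Measure E) [μ.IsAddHaarMeasure] {ψ : E → ℝ}

theorem integral_fderiv_mul_norm_sq_eq (hψ : ψ.HasTemperateGrowth) (f : 𝓢(E, F)) (v : E) :
    ∫ x, fderiv ℝ ψ x v * ‖f x‖ ^ 2 ∂μ =
      -2 * ∫ x, inner ℝ (SchwartzMap.smulLeftCLM F ψ f x) (∂_{v} f x) ∂μ := by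
  set g : 𝓢(E, F) := SchwartzMap.smulLeftCLM F ψ f with hg
  have commutator (x : E) : fderiv ℝ ψ x v * ‖f x‖ ^ 2 =
      inner ℝ (∂_{v} g x) (f x) - inner ℝ (g x) (∂_{v} f x) := by
    rw [hg, lineDerivOp_smulLeftCLM_apply hψ, SchwartzMap.smulLeftCLM_apply_apply hψ,
      inner_add_left, real_inner_smul_left, real_inner_smul_left, real_inner_smul_left,
      real_inner_self_eq_norm_sq, real_inner_comm (f x), add_sub_cancel_right]
  have integrable_inner (a b : 𝓢(E, F)) : Integrable (fun x ↦ inner ℝ (a x) (b x)) μ :=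
    (SchwartzMap.pairing (innerSL ℝ) a b).integrable
  have by_parts : ∫ x, inner ℝ (g x) (∂_{v} f x) ∂μ = -∫ x, inner ℝ (∂_{v} g x) (f x) ∂μ :=
    SchwartzMap.integral_bilinear_lineDerivOp_right_eq_neg_left g f (innerSL ℝ) v
  simp_rw [commutator]
  rw [integral_sub (integrable_inner _ _) (integrable_inner _ _)]
  linarith

theorem sharp_clifford_stmt1_general (hψ : ψ.HasTemperateGrowth) (f : 𝓢(E, F)) (v : E) :
    (1 / 2) * |∫ x, fderiv ℝ ψ x v * ‖f x‖ ^ 2 ∂μ| ≤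
      √(∫ x, |ψ x| ^ 2 * ‖f x‖ ^ 2 ∂μ) * √(∫ x, ‖fderiv ℝ f x v‖ ^ 2 ∂μ) := by
  set g : 𝓢(E, F) := SchwartzMap.smulLeftCLM F ψ f with hg
  have norm_sq_g (x : E) : ‖g x‖ ^ 2 = |ψ x| ^ 2 * ‖f x‖ ^ 2 := by
    rw [hg, SchwartzMap.smulLeftCLM_apply_apply hψ, norm_smul, mul_pow, Real.norm_eq_abs]
  calc (1 / 2) * |∫ x, fderiv ℝ ψ x v * ‖f x‖ ^ 2 ∂μ|
      = ‖∫ x, inner ℝ (g x) (∂_{v} f x) ∂μ‖ := by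
        rw [integral_fderiv_mul_norm_sq_eq μ hψ, ← hg, abs_mul, abs_neg, abs_two,
          one_div, inv_mul_cancel_left₀ two_ne_zero, Real.norm_eq_abs]
    _ ≤ √(∫ x, ‖g x‖ ^ 2 ∂μ) * √(∫ x, ‖∂_{v} f x‖ ^ 2 ∂μ) :=
        norm_integral_inner_le_sqrt_mul_sqrt (g.memLp 2 μ) ((∂_{v} f).memLp 2 μ)
    _ = √(∫ x, |ψ x| ^ 2 * ‖f x‖ ^ 2 ∂μ) * √(∫ x, ‖fderiv ℝ f x v‖ ^ 2 ∂μ) := by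
        simp_rw [norm_sq_g, SchwartzMap.lineDerivOp_apply_eq_fderiv]

end Uncertainty

/-- Position–momentum Heisenberg uncertainty inequality for Schwartz functions on `ℝⁿ`:
`‖x_k f‖_{L²} * ‖∂_{x_k} f‖_{L²} ≥ (1/2) * ‖f‖_{L²}²`. -/
theorem sharp_clifford_stmt1 {n : ℕ} (hn : 1 ≤ n)
    (f : SchwartzMap (EuclideanSpace ℝ (Fin n)) ℂ) (k : Fin n) :
    Real.sqrt (∫ x : EuclideanSpace ℝ (Fin n), |x k| ^ 2 * ‖f x‖ ^ 2) *
      Real.sqrt (∫ x : EuclideanSpace ℝ (Fin n),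
        ‖fderiv ℝ (⇑f) x (EuclideanSpace.single k 1)‖ ^ 2)
    ≥ (1 / 2) * ∫ x : EuclideanSpace ℝ (Fin n), ‖f x‖ ^ 2 := by
  have abs_integral : |∫ x, ‖f x‖ ^ 2| = ∫ x, ‖f x‖ ^ 2 :=
    abs_of_nonneg (integral_nonneg fun x ↦ sq_nonneg ‖f x‖)
  simpa [abs_integral, -EuclideanSpace.coe_proj] using sharp_clifford_stmt1_general volume
    (EuclideanSpace.proj (𝕜 := ℝ) k).hasTemperateGrowth f (EuclideanSpace.single k 1)
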